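/- Let G be a finite connected simple graph with |E| = 4k + 2 edges for an integer k ≥ 1, with cycle basis matrix C, graph Laplacian Λ_G, distinguished edge e₀, bijection ι, and canonical integrand f as defined. If h = |E| − |V| + 1 ≠ 2k + 1, then the canonical integral I_G(ω^{4k+1}) (the Lebesgue integral of f over the positive orthant) equals 0. -/

import Mathlib

open MeasureTheory
open scoped Classical

/-- The value `φⁿ_X(V₁, …, V_n) = ∑_σ sign(σ)·tr((X⁻¹V_{σ(1)})⋯(X⁻¹V_{σ(n)}))`
of the bi-invariant form `ωⁿ_X = tr((X⁻¹ dX)ⁿ)` at `X` on tangent vectors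
`V₁, …, V_n` (factorial-free convention). -/
noncomputable def phiForm {m : ℕ} (n : ℕ) (X : Matrix (Fin m) (Fin m) ℝ)
    (Vs : Fin n → Matrix (Fin m) (Fin m) ℝ) : ℝ :=
  ∑ σ : Equiv.Perm (Fin n),
    ((Equiv.Perm.sign σ : ℤ) : ℝ) *
      (List.ofFn (fun i => X⁻¹ * Vs (σ i))).prod.trace

/-- The incidence matrix of an oriented graph with source map `src` and
target map `tgt`. -/
noncomputable def incidence {V : Type*} [Fintype V] (G : SimpleGraph V)
    (src tgt : G.edgeSet → V) : Matrix V G.edgeSet ℤ :=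
  fun v e => (if v = tgt e then 1 else 0) - (if v = src e then 1 else 0)

/-- The graph Laplacian `Λ_G(x) = Cᵀ · diagonal(x) · C` associated to a cycle
basis matrix `C`. -/
noncomputable def graphLap {E : Type*} [Fintype E] {h : ℕ}
    (C : Matrix E (Fin h) ℤ) (x : E → ℝ) : Matrix (Fin h) (Fin h) ℝ :=
  (C.map (Int.cast : ℤ → ℝ)).transpose * Matrix.diagonal x *
    C.map (Int.cast : ℤ → ℝ)

/-- The affine chart `x(e₀) = 1`: extend `u : E \ {e₀} → ℝ` to `E → ℝ` by
sending `e₀` to `1`. -/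
noncomputable def chart {V : Type*} [Fintype V] (G : SimpleGraph V) (e₀ : G.edgeSet)
    (u : {e : G.edgeSet // e ≠ e₀} → ℝ) : G.edgeSet → ℝ :=
  fun e => if h : e = e₀ then 1 else u ⟨e, h⟩

/-- The canonical integrand: the pullback to the affine chart `x(e₀) = 1` of
the canonical form `ω^{4k+1} = tr((Λ⁻¹ dΛ)^{4k+1})` on the cell of `G`. -/
noncomputable def canonicalIntegrand {V : Type*} [Fintype V]
    (G : SimpleGraph V) {h : ℕ} (C : Matrix G.edgeSet (Fin h) ℤ)
    (k : ℕ) (e₀ : G.edgeSet) (ι : Fin (4 * k + 1) ≃ {e : G.edgeSet // e ≠ e₀})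
    (u : {e : G.edgeSet // e ≠ e₀} → ℝ) : ℝ :=
  phiForm (4 * k + 1) (graphLap C (chart G e₀ u))
    (fun i => graphLap C (fun e => if e = (ι i : {e : G.edgeSet // e ≠ e₀}).val then 1 else 0))


namespace Matrix

section Nilpotent

variable {m R : Type*} [Fintype m] [DecidableEq m] [CommRing R]

open Polynomial

/-- Jacobi's formula for the characteristic polynomial. -/
theorem derivative_charpoly (M : Matrix m m R) :
    derivative M.charpoly = (adjugate (charmatrix M)).trace := by
  have hrow : ∀ i, adjugate (charmatrix M) i i =
      ((charmatrix M).updateRow i (Pi.single i 1)).det := fun i => adjugate_apply _ _ _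
  simp only [trace, diag_apply, hrow, charpoly, det_apply, derivative_sum]
  rw [Finset.sum_comm]
  refine Finset.sum_congr rfl fun σ _ => ?_
  rw [← Finset.smul_sum, Units.smul_def, Units.smul_def, map_zsmul, derivative_prod_finset]
  congr 1
  refine Eq.trans ?_ (Equiv.sum_comp σ _)
  refine Finset.sum_congr rfl fun i _ => ?_
  rw [← Finset.mul_prod_erase Finset.univ _ (Finset.mem_univ i), mul_comm]
  congr 1
  · rw [updateRow_self, charmatrix_apply, map_sub, derivative_C, sub_zero]
    by_cases h : σ i = i
    · rw [h, diagonal_apply_eq, derivative_X, Pi.single_eq_same]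
    · rw [diagonal_apply_ne _ h, map_zero, Pi.single_eq_of_ne (Ne.symm h)]
  · refine Finset.prod_congr rfl fun j hj => ?_
    rw [updateRow_ne]
    exact fun h => (Finset.ne_of_mem_erase hj) (σ.injective h)

/-- A square matrix over a torsion-free commutative ring all of whose positive powers are traceless
is nilpotent of order at most its size. -/
theorem pow_card_eq_zero_of_trace_pow_eq_zero [IsAddTorsionFree R] (M : Matrix m m R)
    (hM : ∀ j, (M ^ (j + 1)).trace = 0) : M ^ Fintype.card m = 0 := by
  nontriviality R
  set N : ℕ → Matrix m m R := fun k => (adjugate (charmatrix M)).map (fun p => p.coeff k) with hN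
  have hmul : charmatrix M * adjugate (charmatrix M) = M.charpoly • (1 : Matrix m m R[X]) :=
    mul_adjugate _
  have hentry : ∀ a b, X * adjugate (charmatrix M) a b =
      ∑ c, C (M a c) * adjugate (charmatrix M) c b + M.charpoly * (1 : Matrix m m R[X]) a b := by
    intro a b
    have := congrFun (congrFun hmul a) b
    rw [charmatrix, sub_mul, sub_apply, smul_apply, smul_eq_mul, ← charmatrix] at this
    rw [← this]
    simp [mul_apply, Matrix.scalar_apply, diagonal_apply]
  have hsucc : ∀ k, N k = M * N (k + 1) + M.charpoly.coeff (k + 1) • 1 := by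
    intro k
    ext a b
    have := congrArg (fun p => p.coeff (k + 1)) (hentry a b)
    simp only [coeff_X_mul, coeff_add, finsetSum_coeff, coeff_C_mul] at this
    simp only [hN, map_apply, add_apply, mul_apply, smul_apply, smul_eq_mul, this]
    congr 1
    by_cases h : a = b <;> simp [h, one_apply]
  have hzero : M * N 0 + M.charpoly.coeff 0 • 1 = 0 := by
    ext a b
    have := congrArg (fun p => p.coeff 0) (hentry a b)
    simp only [coeff_X_mul_zero, coeff_add, finsetSum_coeff, coeff_C_mul] at this
    simp only [hN, map_apply, add_apply, mul_apply, smul_apply, smul_eq_mul, zero_apply]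
    rw [this]
    congr 1
    by_cases h : a = b <;> simp [h, one_apply]
  obtain ⟨K, hK⟩ : ∃ K, ∀ k, K ≤ k → N k = 0 := by
    refine ⟨∑ a, ∑ b, (adjugate (charmatrix M) a b).natDegree + 1, fun k hk => ?_⟩
    ext a b
    refine coeff_eq_zero_of_natDegree_lt (lt_of_lt_of_le (Nat.lt_succ_of_le ?_) hk)
    exact (Finset.single_le_sum (f := fun b => (adjugate (charmatrix M) a b).natDegree)
      (fun _ _ => Nat.zero_le _) (Finset.mem_univ b)).trans
      (Finset.single_le_sum (f := fun a => ∑ b, (adjugate (charmatrix M) a b).natDegree)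
      (fun _ _ => Nat.zero_le _) (Finset.mem_univ a))
  have htr : ∀ d k j, K ≤ k + d → (M ^ (j + 1) * N k).trace = 0 := by
    intro d
    induction d with
    | zero => intro k j hk; rw [hK k hk, mul_zero, trace_zero]
    | succ d ih =>
      intro k j hk
      rw [hsucc, mul_add, ← mul_assoc, ← pow_succ, trace_add, ih (k + 1) (j + 1) (by lia), zero_add,
        Matrix.mul_smul, mul_one, trace_smul, hM, smul_zero]
  have htr' : ∀ k, (M * N k).trace = 0 := fun k => by simpa using htr K k 0 (by lia)
  have hcoeff : ∀ j : ℕ, (j : R) * M.charpoly.coeff j = Fintype.card m * M.charpoly.coeff j := by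
    rintro (_ | k)
    · have := congrArg trace hzero
      rw [trace_add, htr', zero_add, trace_smul, trace_one, trace_zero, smul_eq_mul, mul_comm] at this
      rw [this, Nat.cast_zero, zero_mul]
    · have h₁ : (N k).trace = Fintype.card m * M.charpoly.coeff (k + 1) := by
        rw [hsucc, trace_add, htr', zero_add, trace_smul, trace_one, smul_eq_mul, mul_comm]
      have h₂ : (N k).trace = (derivative M.charpoly).coeff k := by
        rw [derivative_charpoly, trace, trace, finsetSum_coeff]; rfl
      rw [← h₁, h₂, coeff_derivative, mul_comm]; push_cast; rfl
  have hpoly : M.charpoly = X ^ Fintype.card m := by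
    ext j
    rw [coeff_X_pow]
    split_ifs with h
    · rw [h, ← charpoly_natDegree_eq_dim M]
      exact M.charpoly_monic
    · have h' := hcoeff j
      rw [← nsmul_eq_mul, ← nsmul_eq_mul] at h'
      by_contra hne
      refine h (Nat.cast_injective (R := ℤ) (sub_eq_zero.1 ((smul_eq_zero.1 ?_).resolve_right hne)))
      rw [sub_smul, natCast_zsmul, natCast_zsmul, h', sub_self]
  have := aeval_self_charpoly M
  rwa [hpoly, map_pow, aeval_X] at this

end Nilpotent

end Matrix

open Matrix in
theorem List.trace_prod_ofFn_vecMulVec {m R : Type*} [Fintype m] [DecidableEq m] [CommRing R] (n : ℕ)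
    (w v : Fin (n + 1) → m → R) :
    (List.ofFn fun i => vecMulVec (w i) (v i)).prod.trace = ∏ i, v i ⬝ᵥ w (i + 1) := by
  have key : (List.ofFn fun i => vecMulVec (w i) (v i)).prod =
      (∏ i : Fin n, v i.castSucc ⬝ᵥ w i.succ) • vecMulVec (w 0) (v (Fin.last n)) := by
    induction n with
    | zero => simp
    | succ n ih =>
      rw [List.ofFn_succ, List.prod_cons, ih (fun i => w i.succ) (fun i => v i.succ),
        Fin.prod_univ_succ, Matrix.mul_smul, vecMulVec_mul_vecMulVec, vecMulVec_smul, smul_smul,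
        mul_comm]
      rfl
  rw [key, trace_smul, trace_vecMulVec, Fin.prod_univ_castSucc, smul_eq_mul, dotProduct_comm (w 0)]
  simp

open Matrix in
theorem Matrix.exists_eq_mul_of_mul_eq_zero {m p K : Type*} [Fintype m] [Fintype p]
    [DecidableEq p] [Field K]
    {r : ℕ} (hr : Fintype.card m - Fintype.card p = r) (Q : Matrix m m K) (Y : Matrix m p K)
    (L : Matrix p m K) (hL : L * Y = 1) (hQ : Q * Y = 0) :
    ∃ (U : Matrix m (Fin r) K) (W : Matrix (Fin r) m K), Q = U * W := by
  have hsurj : Function.Surjective Y.vecMulLinear := fun x =>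
    ⟨x ᵥ* L, by rw [vecMulLinear_apply, vecMul_vecMul, hL, vecMul_one]⟩
  have hdim : Module.finrank K (LinearMap.ker Y.vecMulLinear) = r := by
    have := Y.vecMulLinear.finrank_range_add_finrank_ker
    rw [LinearMap.range_eq_top.2 hsurj, finrank_top, Module.finrank_fintype_fun_eq_card,
      Module.finrank_fintype_fun_eq_card] at this
    lia
  let b := Module.finBasisOfFinrankEq K _ hdim
  have hrow : ∀ a, Q.row a ∈ LinearMap.ker Y.vecMulLinear := fun a => by
    rw [LinearMap.mem_ker, vecMulLinear_apply]
    exact congrFun hQ a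
  refine ⟨of fun a i => b.repr ⟨Q.row a, hrow a⟩ i, of fun i c => (b i : m → K) c, ?_⟩
  ext a c
  have := congrArg
    (fun z : LinearMap.ker Y.vecMulLinear => (z : m → K) c) (b.sum_repr ⟨Q.row a, hrow a⟩)
  simp only [Submodule.coe_sum, Finset.sum_apply, Submodule.coe_smul, Pi.smul_apply,
    smul_eq_mul] at this
  exact this.symm

section AmitsurLevitzki

open Matrix

theorem Matrix.trace_mul_eq_neg_of_anticomm {m R : Type*} [Fintype m] [Ring R]
    (P Q : Matrix m m R) (h : ∀ a b c d, P a b * Q c d = -(Q c d * P a b)) :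
    (P * Q).trace = -(Q * P).trace := by
  simp only [trace, diag_apply, mul_apply, h, Finset.sum_neg_distrib]
  rw [Finset.sum_comm]

namespace ExteriorAlgebra

variable {m M : Type*} [Fintype m] [DecidableEq m] [AddCommGroup M] [Module ℝ M]

theorem ι_mul_ι_mem_center (v w : M) :
    ι ℝ v * ι ℝ w ∈ Subalgebra.center ℝ (ExteriorAlgebra ℝ M) := by
  have hswap : ∀ x y : M, ι ℝ x * ι ℝ y = -(ι ℝ y * ι ℝ x) := fun x y =>
    eq_neg_of_add_eq_zero_left (ι_add_mul_swap x y)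
  rw [Subalgebra.mem_center_iff]
  intro z
  induction z using ExteriorAlgebra.induction with
  | algebraMap r => exact Algebra.commutes _ _
  | ι x => rw [← mul_assoc, hswap x v, neg_mul, mul_assoc, hswap x w, mul_neg, neg_neg, mul_assoc]
  | mul a b ha hb => rw [mul_assoc, hb, ← mul_assoc, ha, mul_assoc]
  | add a b ha hb => rw [add_mul, ha, hb, mul_add]

/-- A square matrix of degree one elements of an exterior algebra is nilpotent of order at most
twice its size. -/
theorem matrix_pow_two_mul_card_eq_zero (v : m → m → M) :
    (of fun a b => ι ℝ (v a b) : Matrix m m (ExteriorAlgebra ℝ M)) ^ (2 * Fintype.card m) = 0 := by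
  set A : Matrix m m (ExteriorAlgebra ℝ M) := of fun a b => ι ℝ (v a b) with hA
  have hmem : ∀ a b, (A * A) a b ∈ Subalgebra.center ℝ (ExteriorAlgebra ℝ M) := fun a b => by
    rw [mul_apply]
    exact Subalgebra.sum_mem _ fun c _ => ι_mul_ι_mem_center _ _
  let f : Subalgebra.center ℝ (ExteriorAlgebra ℝ M) →+* ExteriorAlgebra ℝ M :=
    (Subalgebra.center ℝ (ExteriorAlgebra ℝ M)).val
  have hf : Function.Injective f := Subtype.val_injective
  obtain ⟨B, hB⟩ : ∃ B, f.mapMatrix B = A * A := ⟨of fun a b => ⟨_, hmem a b⟩, rfl⟩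
  have hcomm : ∀ (z : Subalgebra.center ℝ (ExteriorAlgebra ℝ M)) x, x * f z = f z * x :=
    fun z => Subalgebra.mem_center_iff.1 z.2
  have : IsAddTorsionFree (ExteriorAlgebra ℝ M) := IsAddTorsionFree.of_isTorsionFree ℝ _
  have : IsAddTorsionFree (Subalgebra.center ℝ (ExteriorAlgebra ℝ M)) :=
    IsAddTorsionFree.of_isTorsionFree ℝ _
  have htrace : ∀ j, (B ^ (j + 1)).trace = 0 := by
    intro j
    apply hf
    have h₁ : f (B ^ (j + 1)).trace = (A * (A * (A * A) ^ j)).trace := by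
      rw [← Matrix.mul_assoc, ← pow_succ', ← hB, ← map_pow]
      exact AddMonoidHom.map_trace f _
    have h₂ : A * (A * A) ^ j = (A * A) ^ j * A :=
      ((Commute.refl A).mul_right (Commute.refl A)).pow_right j
    have h₃ : (A * (A * (A * A) ^ j)).trace = -((A * (A * A) ^ j) * A).trace := by
      refine trace_mul_eq_neg_of_anticomm _ _ fun a b c d => ?_
      rw [← hB, ← map_pow, mul_apply, Finset.mul_sum, Finset.sum_mul, ← Finset.sum_neg_distrib]
      refine Finset.sum_congr rfl fun e _ => ?_
      have hs : A a b * A c e = -(A c e * A a b) :=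
        eq_neg_of_add_eq_zero_left (ι_add_mul_swap (v a b) (v c e))
      rw [RingHom.mapMatrix_apply, map_apply, ← mul_assoc, hs, neg_mul, mul_assoc, hcomm,
        mul_assoc]
    rw [mul_assoc, ← h₂] at h₃
    have h₄ := self_eq_neg.1 h₃
    rw [h₁, h₄, map_zero]
  have := congrArg f.mapMatrix (pow_card_eq_zero_of_trace_pow_eq_zero B htrace)
  rwa [map_pow, hB, map_zero, ← sq, ← pow_mul] at this

end ExteriorAlgebra

theorem Matrix.pow_sum_smul_apply {m p K S : Type*} [Fintype m] [DecidableEq m]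
    [Fintype p] [CommRing K]
    [Ring S] [Algebra K S] (As : p → Matrix m m K) (θ : p → S) (n : ℕ) (a b : m) :
    ((of fun a b => ∑ i, As i a b • θ i : Matrix m m S) ^ n) a b =
      ∑ s : Fin n → p, (List.ofFn fun i => As (s i)).prod a b •
        (List.ofFn fun i => θ (s i)).prod := by
  induction n generalizing a with
  | zero => by_cases h : a = b <;> simp [h]
  | succ n ih =>
    rw [pow_succ', mul_apply, ← (Fin.consEquiv fun _ => p).sum_comp, Fintype.sum_prod_type]
    simp only [ih, of_apply, Fin.consEquiv_apply, List.ofFn_succ, Fin.cons_zero, Fin.cons_succ,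
      List.prod_cons, mul_apply, Finset.sum_mul_sum, Finset.sum_smul, smul_mul_smul_comm]
    rw [Finset.sum_comm]
    exact Finset.sum_congr rfl fun i _ => Finset.sum_comm

/-- The **Amitsur–Levitzki theorem** over the reals: the standard polynomial of degree `n` vanishes
on square matrices of size `m` when `2 * m ≤ n`. -/
theorem Matrix.amitsur_levitzki {m : Type*} [Fintype m] [DecidableEq m] {n : ℕ}
    (hn : 2 * Fintype.card m ≤ n)
    (As : Fin n → Matrix m m ℝ) :
    ∑ σ : Equiv.Perm (Fin n), ((Equiv.Perm.sign σ : ℤ) : ℝ) •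
      (List.ofFn fun i => As (σ i)).prod = 0 := by
  let e : Fin n → Fin n → ℝ := fun i => Pi.single i 1
  have hA : (of fun a b => ∑ i, As i a b • ExteriorAlgebra.ι ℝ (e i) :
      Matrix m m (ExteriorAlgebra ℝ (Fin n → ℝ))) ^ n = 0 := by
    have := ExteriorAlgebra.matrix_pow_two_mul_card_eq_zero
      (fun a b => ∑ i, As i a b • e i : m → m → Fin n → ℝ)
    simp only [map_sum, map_smul] at this
    exact pow_eq_zero_of_le hn this
  let φ : ExteriorAlgebra ℝ (Fin n → ℝ) →ₗ[ℝ] ℝ :=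
    ExteriorAlgebra.liftAlternating (Pi.single n detRowAlternating)
  have hφ : ∀ s : Fin n → Fin n,
      φ (List.ofFn fun i => ExteriorAlgebra.ι ℝ (e (s i))).prod = det (of fun i => e (s i)) := fun s => by
    rw [← ExteriorAlgebra.ιMulti_apply, ExteriorAlgebra.liftAlternating_apply_ιMulti,
      Pi.single_eq_same]
    rfl
  have hperm : ∀ σ : Equiv.Perm (Fin n),
      det (of fun i => e (σ i)) = ((Equiv.Perm.sign σ : ℤ) : ℝ) := fun σ => by
    have h := det_permute σ (1 : Matrix (Fin n) (Fin n) ℝ)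
    rw [det_one, mul_one] at h
    rw [← h]
    congr 1
    ext i j
    simp [e, one_apply, Pi.single_apply, eq_comm]
  ext a b
  have h := congrArg φ (congrFun (congrFun hA a) b)
  rw [pow_sum_smul_apply, zero_apply, map_zero, map_sum] at h
  rw [zero_apply, ← h, sum_apply]
  refine Fintype.sum_of_injective (fun σ : Equiv.Perm (Fin n) => (σ : Fin n → Fin n))
    DFunLike.coe_injective _ _ (fun s hs => ?_) fun σ => ?_
  · have hninj : ¬ Function.Injective s := fun hinj =>
      hs ⟨Equiv.ofBijective s (Finite.injective_iff_bijective.1 hinj), rfl⟩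
    rw [Function.not_injective_iff] at hninj
    obtain ⟨i, j, hij, hne⟩ := hninj
    rw [map_smul, hφ, det_zero_of_row_eq hne (congrArg e hij :), smul_zero]
  · rw [map_smul, hφ, hperm, smul_apply, smul_eq_mul, smul_eq_mul, mul_comm]

end AmitsurLevitzki

section

open Matrix

/-- The cyclic antisymmetrisation of a matrix of rank at most `r` vanishes in size at least
`2 * r`. -/
theorem Matrix.sum_sign_mul_prod_dotProduct_eq_zero {r n : ℕ} (hr : 2 * r ≤ n + 1)
    (v w : Fin (n + 1) → Fin r → ℝ) :
    ∑ σ : Equiv.Perm (Fin (n + 1)), ((Equiv.Perm.sign σ : ℤ) : ℝ) *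
      ∏ i, v (σ i) ⬝ᵥ w (σ (i + 1)) = 0 := by
  have h := congrArg trace (amitsur_levitzki (by simpa using hr) fun i => vecMulVec (w i) (v i))
  rw [trace_sum, trace_zero] at h
  rw [← h]
  refine Finset.sum_congr rfl fun σ _ => ?_
  rw [trace_smul, smul_eq_mul,
    List.trace_prod_ofFn_vecMulVec n (fun i => w (σ i)) (fun i => v (σ i))]

theorem phiForm_eq_zero_of_two_mul_le {h n : ℕ} (hn : 2 * h ≤ n) (X : Matrix (Fin h) (Fin h) ℝ)
    (Vs : Fin n → Matrix (Fin h) (Fin h) ℝ) : phiForm n X Vs = 0 := by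
  have := congrArg trace (amitsur_levitzki (by simpa using hn) fun i => X⁻¹ * Vs i)
  simpa only [trace_sum, trace_smul, smul_eq_mul, trace_zero, phiForm] using this

theorem graphLap_indicator {E : Type*} [Fintype E] {h : ℕ} (C : Matrix E (Fin h) ℤ) (e : E) :
    graphLap C (fun e' => if e' = e then 1 else 0) =
      vecMulVec (C.map (Int.cast : ℤ → ℝ) e) (C.map (Int.cast : ℤ → ℝ) e) := by
  ext a b
  simp [graphLap, mul_apply, vecMulVec_apply, diagonal_apply]

/-- If the number of edges is small compared with the loop number, then the canonical form vanishes
because the complementary projection of `C Λ⁻¹ Cᵀ` has small rank. -/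
theorem phiForm_graphLap_eq_zero {E : Type*} [Fintype E] {h n : ℕ} (hn₀ : n ≠ 0)
    (hn : 2 * (Fintype.card E - h) ≤ n + 1) (C : Matrix E (Fin h) ℤ) (x : E → ℝ)
    (hx : ∀ e, x e ≠ 0) (ε : Fin (n + 1) → E) (hε : Function.Injective ε) :
    phiForm (n + 1) (graphLap C x)
      (fun i => graphLap C (fun e => if e = ε i then 1 else 0)) = 0 := by
  by_cases hdet : IsUnit (graphLap C x).det
  swap
  · simp [phiForm, nonsing_inv_apply_not_isUnit _ hdet, List.ofFn_succ]
  set D : Matrix E (Fin h) ℝ := C.map (Int.cast : ℤ → ℝ) with hD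
  set Λ := graphLap C x with hΛ
  have hΛ' : Λ = Dᵀ * diagonal x * D := rfl
  set Q : Matrix E E ℝ := diagonal (fun e => (x e)⁻¹) - D * Λ⁻¹ * Dᵀ with hQdef
  have hL : (Λ⁻¹ * Dᵀ) * (diagonal x * D) = 1 := by
    rw [Matrix.mul_assoc, ← Matrix.mul_assoc Dᵀ, ← hΛ', nonsing_inv_mul _ hdet]
  have hQ : Q * (diagonal x * D) = 0 := by
    rw [hQdef, Matrix.sub_mul, Matrix.mul_assoc D, Matrix.mul_assoc D, hL, Matrix.mul_one,
      ← Matrix.mul_assoc, diagonal_mul_diagonal]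
    simp [hx]
  obtain ⟨U, W, hUW⟩ := exists_eq_mul_of_mul_eq_zero (by rw [Fintype.card_fin]) Q _ _ hL hQ
  have hoff : ∀ a b, a ≠ b → D a ⬝ᵥ (Λ⁻¹ *ᵥ D b) = -(U a ⬝ᵥ Wᵀ b) := fun a b hab => by
    have h₁ : Q a b = U a ⬝ᵥ Wᵀ b := by rw [hUW]; rfl
    rw [← h₁, hQdef, Matrix.sub_apply, diagonal_apply_ne _ hab, zero_sub, neg_neg, Matrix.mul_assoc]
    rfl
  have hlap : ∀ e, Λ⁻¹ * graphLap C (fun e' => if e' = e then 1 else 0) =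
      vecMulVec (Λ⁻¹ *ᵥ D e) (D e) := fun e => by
    rw [graphLap_indicator, mul_vecMulVec]
  have hne : ∀ i : Fin (n + 1), i ≠ i + 1 := fun i h =>
    hn₀ (by simpa using left_eq_add.1 h)
  have hsum := sum_sign_mul_prod_dotProduct_eq_zero hn (fun i => U (ε i)) (fun i => Wᵀ (ε i))
  refine Eq.trans ?_ ((congrArg ((-1 : ℝ) ^ (n + 1) * ·) hsum).trans (mul_zero _))
  rw [phiForm, Finset.mul_sum]
  refine Finset.sum_congr rfl fun σ _ => ?_
  simp only [hlap]
  rw [List.trace_prod_ofFn_vecMulVec n (fun i => Λ⁻¹ *ᵥ D (ε (σ i))) (fun i => D (ε (σ i))),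
    mul_left_comm]
  congr 1
  rw [Finset.prod_congr rfl fun i _ => hoff _ _ fun h => hne i (σ.injective (hε h)),
    Finset.prod_neg, Finset.card_univ, Fintype.card_fin]

end

/-- If the loop number `h` differs from `2k + 1`, the canonical integral
`I_G(ω^{4k+1})` vanishes. -/
theorem canonicalIntegral_eq_zero_of_loopNumber_ne
    {V : Type*} [Fintype V] (G : SimpleGraph V) (hG : G.Connected)
    (src tgt : G.edgeSet → V)
    (hor : ∀ e : G.edgeSet, (e : Sym2 V) = s(src e, tgt e))
    (k : ℕ) (hk : 1 ≤ k)
    (hE : Fintype.card G.edgeSet = 4 * k + 2)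
    (h : ℕ)
    (hh : (h : ℤ) = (Fintype.card G.edgeSet : ℤ) - Fintype.card V + 1)
    (C : Matrix G.edgeSet (Fin h) ℤ)
    (hinj : Function.Injective C.mulVecLin)
    (hker : LinearMap.range C.mulVecLin =
      LinearMap.ker (incidence G src tgt).mulVecLin)
    (e₀ : G.edgeSet) (ι : Fin (4 * k + 1) ≃ {e : G.edgeSet // e ≠ e₀})
    (hne : h ≠ 2 * k + 1) :
    ∫ u in {u : {e : G.edgeSet // e ≠ e₀} → ℝ | ∀ e, 0 < u e},
      canonicalIntegrand G C k e₀ ι u = 0 := by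
  have hzero : ∀ u ∈ {u : {e : G.edgeSet // e ≠ e₀} → ℝ | ∀ e, 0 < u e},
      canonicalIntegrand G C k e₀ ι u = 0 := fun u hu => by
    rw [canonicalIntegrand]
    rcases hne.lt_or_gt with hlt | hgt
    · exact phiForm_eq_zero_of_two_mul_le (by lia) _ _
    · have hk₀ : 4 * k ≠ 0 := by lia
      have hcard : 2 * (Fintype.card G.edgeSet - h) ≤ 4 * k + 1 := by lia
      have hx : ∀ e, chart G e₀ u e ≠ 0 := fun e => by
        unfold chart
        split_ifs with he
        · exact one_ne_zero
        · exact (hu ⟨e, he⟩).ne'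
      convert phiForm_graphLap_eq_zero hk₀ hcard C _ hx (fun i => (ι i).val)
        (Subtype.val_injective.comp ι.injective)
  exact setIntegral_eq_zero_of_forall_eq_zero hzero
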